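/- Let d = 2 and let b be the planar hard-sphere kernel b(c) = ½√(1−c) on the unit circle S¹. Then LS(√2, b) holds; in particular the optimal log-Sobolev constant satisfies Λ_b ≥ √2 and 2√(Λ_b) ≥ 1. -/

import Mathlib

open MeasureTheory
open scoped RealInnerProductSpace

noncomputable section

/-- Euclidean space `ℝ^d`. -/
abbrev E (d : ℕ) : Type := EuclideanSpace ℝ (Fin d)

/-- The unit sphere `S^{d-1}` of `ℝ^d`. -/
abbrev Sph (d : ℕ) : Type := Metric.sphere (0 : E d) 1

/-- The surface measure on the unit sphere, realized as a Hausdorff measure. -/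
def sphMeasure (d : ℕ) : Measure (Sph d) := μH[(d : ℝ) - 1]

open Classical in
/-- The 0-homogeneous extension of a function defined on the unit sphere. -/
def homogExt {d : ℕ} (F : Sph d → ℝ) (x : E d) : ℝ :=
  if hx : x = 0 then 0
  else F ⟨‖x‖⁻¹ • x, by
    rw [mem_sphere_zero_iff_norm, norm_smul, norm_inv, norm_norm,
      inv_mul_cancel₀ (norm_ne_zero_iff.mpr hx)]⟩

/-- Smoothness of a function on the sphere, via its 0-homogeneous extension. -/
def SphSmooth {d : ℕ} (F : Sph d → ℝ) : Prop :=
  ContDiffOn ℝ (⊤ : ℕ∞) (homogExt F) {x : E d | x ≠ 0}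

/-- Spherical gradient: the Euclidean gradient of the 0-homogeneous extension. -/
def sphGrad {d : ℕ} (F : Sph d → ℝ) (σ : Sph d) : E d :=
  gradient (homogExt F) (σ : E d)

/-- Euclidean Laplacian of a function on `ℝ^d`. -/
def lapl {d : ℕ} (f : E d → ℝ) (x : E d) : ℝ :=
  ∑ i : Fin d,
    fderiv ℝ (fun y => fderiv ℝ f y (EuclideanSpace.single i 1)) x (EuclideanSpace.single i 1)

/-- Spherical Laplacian: the Euclidean Laplacian of the 0-homogeneous extension. -/
def sphLap {d : ℕ} (F : Sph d → ℝ) (σ : Sph d) : ℝ :=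
  lapl (homogExt F) (σ : E d)

/-- The spherical linear Boltzmann operator `𝓑` with kernel `b`. -/
def sphB {d : ℕ} (b : ℝ → ℝ) (F : Sph d → ℝ) (σ : Sph d) : ℝ :=
  ∫ (σ' : Sph d), (F σ' - F σ) * b ⟪(σ' : E d), (σ : E d)⟫ ∂(sphMeasure d)

/-- The intertwined iterated carré du champ `Γ²_{𝓑,Δ}(g,g)`. -/
def Gamma2BD {d : ℕ} (b : ℝ → ℝ) (g : Sph d → ℝ) (σ : Sph d) : ℝ :=
  (1 / 2) * sphB b (fun τ => ‖sphGrad g τ‖ ^ 2) σ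
    - ⟪sphGrad g σ, sphGrad (fun τ => sphB b g τ) σ⟫

/-- The iterated carré du champ `Γ²_{Δ,Δ}(g,g)` of the spherical Laplacian. -/
def Gamma2DD {d : ℕ} (g : Sph d → ℝ) (σ : Sph d) : ℝ :=
  (1 / 2) * sphLap (fun τ => ‖sphGrad g τ‖ ^ 2) σ
    - ⟪sphGrad g σ, sphGrad (fun τ => sphLap g τ) σ⟫

/-- A collision kernel: non-negative, measurable, satisfying the Lévy condition. -/
def LevyKernel (d : ℕ) (b : ℝ → ℝ) : Prop :=
  Measurable b ∧ (∀ c ∈ Set.Icc (-1 : ℝ) 1, 0 ≤ b c) ∧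
    ∀ e : Sph d,
      Integrable
        (fun σ' : Sph d => (1 - ⟪(e : E d), (σ' : E d)⟫ ^ 2) * b ⟪(e : E d), (σ' : E d)⟫)
        (sphMeasure d)

/-- The log-Sobolev inequality `LS(Λ, b)` on the sphere. -/
def LS (d : ℕ) (b : ℝ → ℝ) (Λ : ℝ) : Prop :=
  ∀ f : Sph d → ℝ, SphSmooth f → (∀ σ, 0 < f σ) → (∀ σ, f (-σ) = f σ) →
    Λ * ∫ (σ : Sph d), (∫ (σ' : Sph d),
          (f σ' - f σ) ^ 2 / (f σ' + f σ) * b ⟪(σ' : E d), (σ : E d)⟫ ∂(sphMeasure d))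
        ∂(sphMeasure d)
      ≤ ∫ (σ : Sph d), Gamma2BD b (fun τ => Real.log (f τ)) σ * f σ ∂(sphMeasure d)

/-!
In the angle coordinate, `Γ²_{𝓑,Δ}(g,g)(θ) = ½ ∫ (g'(θ+s) - g'(θ))² b(cos s) ds`. Against functions
with antipodal symmetry only `b(c) + b(-c)` matters, and for hard spheres it lies between
`m = √2/2` and `M = 1`, so on both sides of the inequality the kernel may be replaced by a constant.

For `g = log f`, the function `g'` has mean zero, so `∫ (g'(θ+s) - g'(θ))² ds` is bounded below by a
multiple of `g'(θ)²`, and `g'² f = 4 (√f)'²`. On the other side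
`(x - y)² / (x + y) ≤ 2 (√x - √y)²`, and Wirtinger's inequality for the `π`-periodic function `√f`
bounds the double integral of `(√f(s) - √f(t))²` by `∫ (√f)'²`. The ratio of the two bounds
is `2m/M`.
-/

section

open Real Set Function

section PeriodicFunctions

variable {ψ k : ℝ → ℝ} {T : ℝ}

lemma periodic_deriv (hψ : Periodic ψ T) : Periodic (deriv ψ) T := fun t => by
  rw [← deriv_comp_add_const, funext hψ]

lemma integral_comp_add_left_of_periodic (hψ : Periodic ψ T) (t : ℝ) :
    ∫ s in 0..T, ψ (t + s) = ∫ s in 0..T, ψ s := by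
  simpa using hψ.intervalIntegral_add_eq t 0

lemma integral_zero_two_mul_of_periodic (hψ : Periodic ψ T) (hψc : Continuous ψ) :
    ∫ s in 0..2 * T, ψ s = 2 * ∫ s in 0..T, ψ s := by
  simpa using hψ.intervalIntegral_add_zsmul_eq 2 0 hψc.intervalIntegrable

lemma intervalIntegrable_first_half (hT : 0 ≤ T) (hk : IntervalIntegrable k volume 0 (2 * T)) :
    IntervalIntegrable k volume 0 T :=
  hk.mono_set (uIcc_subset_uIcc_left (mem_uIcc_of_le hT (by linarith)))

lemma intervalIntegrable_second_half (hT : 0 ≤ T) (hk : IntervalIntegrable k volume 0 (2 * T)) :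
    IntervalIntegrable k volume T (2 * T) :=
  hk.mono_set (uIcc_subset_uIcc_right (mem_uIcc_of_le (by linarith) (by linarith)))

lemma intervalIntegrable_translate (hT : 0 ≤ T) (hk : IntervalIntegrable k volume 0 (2 * T)) :
    IntervalIntegrable (fun s => k (s + T)) volume 0 T := by
  simpa [two_mul] using (intervalIntegrable_second_half hT hk).comp_add_right T

lemma integral_mul_eq_integral_mul_add_translate (hT : 0 ≤ T) (hψ : Periodic ψ T)
    (hψc : Continuous ψ) (hk : IntervalIntegrable k volume 0 (2 * T)) :
    ∫ s in 0..2 * T, ψ s * k s = ∫ s in 0..T, ψ s * (k s + k (s + T)) := by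
  have hfirst := (intervalIntegrable_first_half hT hk).continuousOn_mul hψc.continuousOn
  have hsecond := (intervalIntegrable_second_half hT hk).continuousOn_mul hψc.continuousOn
  have htranslate := (intervalIntegrable_translate hT hk).continuousOn_mul hψc.continuousOn
  have hshift : ∫ s in T..2 * T, ψ s * k s = ∫ s in 0..T, ψ s * k (s + T) := by
    simpa [two_mul, hψ _] using
      (intervalIntegral.integral_comp_add_right (a := 0) (b := T) (fun s => ψ s * k s) T).symm
  rw [← intervalIntegral.integral_add_adjacent_intervals hfirst hsecond, hshift,
    ← intervalIntegral.integral_add hfirst htranslate]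
  simp only [mul_add]

lemma integral_mul_le_of_add_translate_le (hT : 0 ≤ T) (hψ : Periodic ψ T) (hψc : Continuous ψ)
    (hψ₀ : ∀ s, 0 ≤ ψ s) (hk : IntervalIntegrable k volume 0 (2 * T)) {M : ℝ}
    (hM : ∀ s, k s + k (s + T) ≤ M) :
    ∫ s in 0..2 * T, ψ s * k s ≤ M * ∫ s in 0..T, ψ s := by
  rw [integral_mul_eq_integral_mul_add_translate hT hψ hψc hk, mul_comm M,
    ← intervalIntegral.integral_mul_const]
  refine intervalIntegral.integral_mono_on hT ?_ ((hψc.mul_const M).intervalIntegrable _ _)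
    fun s _ => mul_le_mul_of_nonneg_left (hM s) (hψ₀ s)
  exact ((intervalIntegrable_first_half hT hk).add
    (intervalIntegrable_translate hT hk)).continuousOn_mul hψc.continuousOn

lemma le_integral_mul_of_le_add_translate (hT : 0 ≤ T) (hψ : Periodic ψ T) (hψc : Continuous ψ)
    (hψ₀ : ∀ s, 0 ≤ ψ s) (hk : IntervalIntegrable k volume 0 (2 * T)) {m : ℝ}
    (hm : ∀ s, m ≤ k s + k (s + T)) :
    m * ∫ s in 0..T, ψ s ≤ ∫ s in 0..2 * T, ψ s * k s := by
  have h := integral_mul_le_of_add_translate_le hT hψ hψc hψ₀ hk.neg (M := -m)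
    fun s => by simp only [Pi.neg_apply]; linarith [hm s]
  simpa using h

end PeriodicFunctions

section ParametricIntegrals

variable {k : ℝ → ℝ} {a b : ℝ}

lemma continuous_integral_mul {Ψ : ℝ → ℝ → ℝ} (hΨ : Continuous (uncurry Ψ))
    (hk : IntervalIntegrable k volume a b) : Continuous fun t => ∫ s in a..b, Ψ t s * k s := by
  refine continuous_iff_continuousAt.2 fun t₀ => ?_
  obtain ⟨C, hC⟩ := ((isCompact_closedBall t₀ 1).prod
    (isCompact_uIcc (a := a) (b := b))).exists_bound_of_continuousOn hΨ.continuousOn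
  refine intervalIntegral.continuousAt_of_dominated_interval (bound := fun s => C * ‖k s‖)
    (.of_forall fun t => ?_) ?_ (hk.norm.const_mul C) (.of_forall fun s _ => ?_)
  · exact (hk.continuousOn_mul (hΨ.uncurry_left t).continuousOn).def'.aestronglyMeasurable
  · filter_upwards [Metric.closedBall_mem_nhds t₀ one_pos] with t ht
    refine .of_forall fun s hs => ?_
    rw [norm_mul]
    gcongr
    exact hC (t, s) ⟨ht, uIoc_subset_uIcc hs⟩
  · exact ((hΨ.uncurry_right s).mul continuous_const).continuousAt

lemma hasDerivAt_integral_sub_mul {g : ℝ → ℝ} (hg : ContDiff ℝ 1 g)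
    (hk : IntervalIntegrable k volume a b) (θ : ℝ) :
    HasDerivAt (fun t => ∫ s in a..b, (g (t + s) - g t) * k s)
      (∫ s in a..b, (deriv g (θ + s) - deriv g θ) * k s) θ := by
  have hgc : Continuous g := hg.continuous
  have hg' : Continuous (deriv g) := hg.continuous_deriv le_rfl
  have hderiv (t : ℝ) : HasDerivAt g (deriv g t) t := (hg.differentiable one_ne_zero t).hasDerivAt
  have hint {u : ℝ → ℝ} (hu : Continuous u) (t : ℝ) :
      IntervalIntegrable (fun s => (u (t + s) - u t) * k s) volume a b :=
    hk.continuousOn_mul (by fun_prop)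
  obtain ⟨C, hC⟩ := ((isCompact_closedBall θ 1).prod
    (isCompact_uIcc (a := a) (b := b))).exists_bound_of_continuousOn
    (f := fun q : ℝ × ℝ => deriv g (q.1 + q.2) - deriv g q.1) (by fun_prop)
  refine (intervalIntegral.hasDerivAt_integral_of_dominated_loc_of_deriv_le
    (F' := fun t s => (deriv g (t + s) - deriv g t) * k s) (bound := fun s => C * ‖k s‖)
    (Metric.closedBall_mem_nhds θ one_pos) (.of_forall fun t => (hint hgc t).def'.1)
    (hint hgc θ) (hint hg' θ).def'.1 (.of_forall fun s hs t ht => ?_)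
    (hk.norm.const_mul C) (.of_forall fun s _ t _ => ?_)).2
  · rw [norm_mul]
    gcongr
    exact hC (t, s) ⟨ht, uIoc_subset_uIcc hs⟩
  · exact (((hderiv (t + s)).comp_add_const t s).sub (hderiv t)).mul_const (k s)

end ParametricIntegrals

section MeanSquare

variable {α : Type*} [MeasurableSpace α] {μ : Measure α} [IsFiniteMeasure μ] {h : α → ℝ}

lemma integral_sub_const_sq (hh : MemLp h 2 μ) (c : ℝ) :
    ∫ s, (h s - c) ^ 2 ∂μ = ∫ s, h s ^ 2 ∂μ - 2 * c * ∫ s, h s ∂μ + c ^ 2 * μ.real univ := by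
  have hlin : Integrable (fun s => 2 * c * h s) μ := (hh.integrable one_le_two).const_mul _
  have hsq : Integrable (fun s => h s ^ 2 - 2 * c * h s) μ := hh.integrable_sq.sub hlin
  calc ∫ s, (h s - c) ^ 2 ∂μ = ∫ s, (h s ^ 2 - 2 * c * h s + c ^ 2) ∂μ := by
        congr with s
        ring
    _ = _ := by
        rw [integral_add hsq (integrable_const _), integral_sub hh.integrable_sq hlin,
          integral_const_mul, integral_const, smul_eq_mul, mul_comm (μ.real univ)]

lemma integral_integral_sub_sq (hh : MemLp h 2 μ) :
    ∫ t, ∫ s, (h s - h t) ^ 2 ∂μ ∂μ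
      = 2 * (μ.real univ * ∫ t, h t ^ 2 ∂μ - (∫ t, h t ∂μ) ^ 2) := by
  have hlin : Integrable (fun t => 2 * (∫ s, h s ∂μ) * h t) μ :=
    (hh.integrable one_le_two).const_mul _
  have hsq : Integrable (fun t => ∫ s, h s ^ 2 ∂μ - 2 * (∫ s, h s ∂μ) * h t) μ :=
    (integrable_const _).sub hlin
  simp only [integral_sub_const_sq hh, mul_right_comm 2 (h _)]
  rw [integral_add hsq (hh.integrable_sq.mul_const _), integral_sub (integrable_const _) hlin,
    integral_const_mul, integral_mul_const, integral_const, smul_eq_mul]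
  ring

end MeanSquare

section Wirtinger

variable {a b : ℝ}

lemma memLp_restrict_Ioc_of_continuousOn {V : Type*} [NormedAddCommGroup V] {f : ℝ → V}
    {p : ENNReal} (hf : ContinuousOn f (Icc a b)) : MemLp f p (volume.restrict (Ioc a b)) := by
  obtain ⟨C, hC⟩ := isCompact_Icc.exists_bound_of_continuousOn hf
  exact .of_bound ((hf.mono Ioc_subset_Icc_self).aestronglyMeasurable measurableSet_Ioc) C
    (ae_restrict_of_forall_mem measurableSet_Ioc fun x hx => hC x (Ioc_subset_Icc_self hx))

lemma norm_fourierCoeffOn_le_norm_fourierCoeffOn_deriv {f f' : ℝ → ℂ} (hab : a < b)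
    (hf : ∀ x ∈ uIcc a b, HasDerivAt f (f' x) x) (hf' : IntervalIntegrable f' volume a b)
    (hper : f a = f b) {n : ℤ} (hn : n ≠ 0) :
    2 * π / (b - a) * ‖fourierCoeffOn hab f n‖ ≤ ‖fourierCoeffOn hab f' n‖ := by
  have hL : 0 < b - a := sub_pos.2 hab
  have hnorm : 2 * π / (b - a) * ‖fourierCoeffOn hab f n‖
      = |(n : ℝ)|⁻¹ * ‖fourierCoeffOn hab f' n‖ := by
    rw [fourierCoeffOn_of_hasDerivAt hab hn hf hf', hper, sub_self, mul_zero, zero_sub,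
      ← Complex.ofReal_sub]
    simp only [norm_mul, norm_neg, norm_div, norm_one, Complex.norm_I, Complex.norm_real,
      Complex.norm_intCast, Complex.norm_ofNat, norm_of_nonneg hL.le, norm_of_nonneg pi_pos.le]
    field_simp
  rw [hnorm]
  exact mul_le_of_le_one_left (norm_nonneg _)
    (inv_le_one_of_one_le₀ (by exact_mod_cast Int.one_le_abs hn))

theorem wirtinger_inequality {f f' : ℝ → ℂ} (hab : a < b)
    (hf : ∀ x ∈ uIcc a b, HasDerivAt f (f' x) x)
    (hf' : MemLp f' 2 (volume.restrict (Ioc a b))) (hper : f a = f b) :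
    (2 * π / (b - a)) ^ 2 *
        ((∫ x in a..b, ‖f x‖ ^ 2) - (b - a)⁻¹ * ‖∫ x in a..b, f x‖ ^ 2)
      ≤ ∫ x in a..b, ‖f' x‖ ^ 2 := by
  have hL : 0 < b - a := sub_pos.2 hab
  have hf'int : IntervalIntegrable f' volume a b :=
    (intervalIntegrable_iff_integrableOn_Ioc_of_le hab.le).2 (hf'.integrable one_le_two)
  have hfc : ContinuousOn f (Icc a b) := fun x hx =>
    (hf x (Icc_subset_uIcc hx)).continuousAt.continuousWithinAt
  have hfL2 : MemLp f 2 (volume.restrict (Ioc a b)) := memLp_restrict_Ioc_of_continuousOn hfc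
  have hmean : ‖fourierCoeffOn hab f 0‖ ^ 2 = (b - a)⁻¹ ^ 2 * ‖∫ x in a..b, f x‖ ^ 2 := by
    rw [fourierCoeffOn_eq_integral, norm_smul, mul_pow, one_div, norm_of_nonneg (inv_pos.2 hL).le]
    simp
  -- Parseval for `f` and `f'`, compared term by term once the zeroth coefficient of `f` is removed.
  have hle := hasSum_le (fun n => ?_)
    (((hasSum_sq_fourierCoeffOn hab hfL2).update 0 0).mul_left ((2 * π / (b - a)) ^ 2))
    (hasSum_sq_fourierCoeffOn hab hf')
  · rw [hmean, smul_eq_mul, smul_eq_mul] at hle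
    refine le_of_mul_le_mul_left (le_of_eq_of_le ?_ hle) (inv_pos.2 hL)
    ring
  · rcases eq_or_ne n 0 with rfl | hn
    · simp
    · rw [update_of_ne hn, ← mul_pow]
      gcongr
      exact norm_fourierCoeffOn_le_norm_fourierCoeffOn_deriv hab hf hf'int hper hn

lemma integral_integral_sub_sq_le {h : ℝ → ℝ} (hab : a < b) (hh : ContDiff ℝ 1 h)
    (hper : h a = h b) :
    ∫ t in a..b, ∫ s in a..b, (h s - h t) ^ 2
      ≤ (b - a) ^ 3 / (2 * π ^ 2) * ∫ t in a..b, deriv h t ^ 2 := by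
  have hL : 0 < b - a := sub_pos.2 hab
  have hwirtinger := wirtinger_inequality (f := fun x => (h x : ℂ))
    (f' := fun x => ((deriv h x : ℝ) : ℂ)) hab
    (fun x _ => (hh.differentiable one_ne_zero x).hasDerivAt.ofReal_comp)
    (memLp_restrict_Ioc_of_continuousOn
      (Complex.continuous_ofReal.comp (hh.continuous_deriv le_rfl)).continuousOn) (by rw [hper])
  simp only [Complex.norm_real, norm_eq_abs, sq_abs, intervalIntegral.integral_ofReal] at hwirtinger
  have hvar : ∫ t in a..b, ∫ s in a..b, (h s - h t) ^ 2
      = 2 * ((b - a) * (∫ t in a..b, h t ^ 2) - (∫ t in a..b, h t) ^ 2) := by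
    simpa [intervalIntegral.integral_of_le hab.le, hab.le] using integral_integral_sub_sq
      (memLp_restrict_Ioc_of_continuousOn (a := a) (b := b) hh.continuous.continuousOn)
  rw [hvar]
  calc _ = (b - a) ^ 3 / (2 * π ^ 2) * ((2 * π / (b - a)) ^ 2 *
        ((∫ x in a..b, h x ^ 2) - (b - a)⁻¹ * (∫ x in a..b, h x) ^ 2)) := by field_simp
    _ ≤ _ := by gcongr

end Wirtinger

section UnitCircle

/-- The identification of the complex plane with `ℝ²`. -/
def planeIsometryEquiv : ℂ ≃ₗᵢ[ℝ] E 2 := Complex.orthonormalBasisOneI.repr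

/-- The identification of the complex unit circle with `S¹`. -/
def circleIsometryEquiv : Circle ≃ᵢ Sph 2 where
  toEquiv := planeIsometryEquiv.toEquiv.subtypeEquiv fun z => by simp [Submonoid.unitSphere]
  isometry_toFun := fun z w => planeIsometryEquiv.isometry z w

/-- The point of the unit circle at angle `θ`. -/
def circlePt (θ : ℝ) : Sph 2 := circleIsometryEquiv (Circle.exp θ)

lemma coe_circlePt (θ : ℝ) :
    (circlePt θ : E 2) = planeIsometryEquiv (Complex.exp (θ * Complex.I)) := by
  rw [← Circle.coe_exp]
  rfl

lemma inner_coe_circlePt (θ : ℝ) (z : ℂ) :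
    ⟪(circlePt θ : E 2), planeIsometryEquiv z⟫
      = (z * Complex.exp (-(θ * Complex.I))).re := by
  rw [coe_circlePt, LinearIsometryEquiv.inner_map_map, Complex.inner, ← Complex.exp_conj]
  simp

lemma inner_circlePt_add_pi_div_two (θ : ℝ) (z : ℂ) :
    ⟪(circlePt (θ + π / 2) : E 2), planeIsometryEquiv z⟫
      = (z * Complex.exp (-(θ * Complex.I))).im := by
  rw [inner_coe_circlePt]
  have hquarter : Complex.exp (-(((θ + π / 2 : ℝ) : ℂ) * Complex.I))
      = -Complex.I * Complex.exp (-(θ * Complex.I)) := by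
    rw [← Complex.exp_neg_pi_div_two_mul_I, ← Complex.exp_add]
    congr 1
    push_cast
    ring
  rw [hquarter, mul_left_comm]
  simp

lemma inner_circlePt (s t : ℝ) : ⟪(circlePt s : E 2), (circlePt t : E 2)⟫ = cos (s - t) := by
  rw [coe_circlePt t, inner_coe_circlePt, ← Complex.exp_add, ← neg_mul, ← add_mul, ← cos_neg,
    neg_sub, ← Complex.exp_ofReal_mul_I_re, Complex.ofReal_sub, sub_eq_add_neg]

lemma periodic_circlePt : Periodic circlePt (2 * π) := Circle.periodic_exp.comp _

lemma circlePt_add_pi (θ : ℝ) : circlePt (θ + π) = -circlePt θ := by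
  ext1
  simp [coe_circlePt, add_mul, Complex.exp_add]

lemma surjective_circlePt : Surjective circlePt :=
  circleIsometryEquiv.surjective.comp Circle.exp_surjective

lemma dist_circlePt_sq (s t : ℝ) : dist (circlePt s) (circlePt t) ^ 2 = 2 - 2 * cos (s - t) := by
  rw [Subtype.dist_eq, dist_eq_norm, norm_sub_sq_real, inner_circlePt, norm_eq_of_mem_sphere,
    norm_eq_of_mem_sphere]
  ring

lemma lipschitzWith_circlePt : LipschitzWith 1 circlePt := by
  refine .of_dist_le_mul fun s t => abs_le_of_sq_le_sq' ?_ (by positivity) |>.2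
  rw [dist_circlePt_sq, NNReal.coe_one, one_mul, dist_eq, sq_abs]
  linarith [one_sub_sq_div_two_le_cos (x := s - t)]

lemma contDiff_circlePt {n : WithTop ℕ∞} : ContDiff ℝ n fun t => (circlePt t : E 2) := by
  simp only [coe_circlePt]
  refine planeIsometryEquiv.contDiff.comp ?_
  exact (Complex.ofRealCLM.contDiff.mul contDiff_const).cexp

instance : Fact (0 < 2 * π) := ⟨two_pi_pos⟩

/-- The identification of `ℝ / 2πℤ` with the unit circle through the angle. -/
def angleHomeo : AddCircle (2 * π) ≃ₜ Sph 2 :=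
  AddCircle.homeomorphCircle'.trans circleIsometryEquiv.toHomeomorph

lemma angleHomeo_coe (θ : ℝ) : angleHomeo θ = circlePt θ := rfl

lemma dist_angleHomeo_add (a s t : AddCircle (2 * π)) :
    dist (angleHomeo (a + s)) (angleHomeo (a + t)) = dist (angleHomeo s) (angleHomeo t) := by
  induction a using QuotientAddGroup.induction_on with | _ a
  induction s using QuotientAddGroup.induction_on with | _ s
  induction t using QuotientAddGroup.induction_on with | _ t
  rw [← sq_eq_sq₀ dist_nonneg dist_nonneg]
  refine (dist_circlePt_sq (a + s) (a + t)).trans ?_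
  rw [add_sub_add_left_eq_sub]
  exact (dist_circlePt_sq s t).symm

lemma isAddLeftInvariant_map_symm_hausdorffMeasure {G X : Type*} [AddGroup G] [TopologicalSpace G]
    [ContinuousAdd G] [MeasurableSpace G] [BorelSpace G] [MetricSpace X] [MeasurableSpace X]
    [BorelSpace X] (e : G ≃ₜ X) (he : ∀ a s t, dist (e (a + s)) (e (a + t)) = dist (e s) (e t))
    (r : ℝ) : (μH[r].map e.symm : Measure G).IsAddLeftInvariant := by
  refine ⟨fun a => ?_⟩
  let translation : X ≃ᵢ X :=
    { toEquiv := (e.symm.toEquiv.trans (Equiv.addLeft a)).trans e.toEquiv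
      isometry_toFun := .of_dist_eq fun x y => by simp [he] }
  have hcomm : (a + ·) ∘ e.symm = e.symm ∘ translation := by
    ext x
    simp [translation]
  rw [Measure.map_map (measurable_const_add a) e.symm.continuous.measurable, hcomm,
    ← Measure.map_map e.symm.continuous.measurable translation.continuous.measurable,
    translation.map_hausdorffMeasure]

instance : IsFiniteMeasure (sphMeasure 2) := by
  have hcover : univ ⊆ circlePt '' Icc 0 (2 * π) := fun σ _ => by
    obtain ⟨t, rfl⟩ := surjective_circlePt σ
    obtain ⟨s, hs, hst⟩ := periodic_circlePt.exists_mem_Ico₀ two_pi_pos t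
    exact ⟨s, Ico_subset_Icc_self hs, hst.symm⟩
  have hdim : ((2 : ℕ) : ℝ) - 1 = 1 := by norm_num
  refine ⟨(measure_mono hcover).trans_lt ?_⟩
  rw [sphMeasure, hdim]
  refine (lipschitzWith_circlePt.hausdorffMeasure_image_le zero_le_one _).trans_lt ?_
  simp [ENNReal.mul_lt_top_iff]

/-- The surface measure of the unit circle read in the angle coordinate. -/
def angleMeasure : Measure (AddCircle (2 * π)) := (sphMeasure 2).map angleHomeo.symm

instance : IsFiniteMeasure angleMeasure := by
  unfold angleMeasure
  infer_instance

instance : angleMeasure.IsAddLeftInvariant :=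
  isAddLeftInvariant_map_symm_hausdorffMeasure angleHomeo dist_angleHomeo_add _

/-- The constant density of the surface measure of the unit circle with respect to the angle. Its
value is `1`, but both sides of `LS` are quadratic in it, so only its existence matters. -/
def angularDensity : NNReal := angleMeasure.addHaarScalarFactor volume

lemma integral_sphMeasure_two (F : Sph 2 → ℝ) :
    ∫ σ, F σ ∂(sphMeasure 2) = angularDensity * ∫ t in 0..2 * π, F (circlePt t) := by
  calc ∫ σ, F σ ∂(sphMeasure 2) = ∫ t, F (angleHomeo t) ∂angleMeasure := by
        rw [angleMeasure, angleHomeo.symm.measurableEmbedding.integral_map]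
        simp
    _ = angularDensity * ∫ t, F (angleHomeo t) := by
        rw [Measure.isAddLeftInvariant_eq_smul angleMeasure volume, integral_smul_nnreal_measure]
        rfl
    _ = _ := by
        rw [← AddCircle.intervalIntegral_preimage _ 0, zero_add]
        simp only [angleHomeo_coe]

lemma homogExt_coe {d : ℕ} (F : Sph d → ℝ) (σ : Sph d) : homogExt F (σ : E d) = F σ := by
  simp [homogExt, ne_zero_of_mem_unit_sphere σ]

lemma SphSmooth.contDiff_comp_circlePt {F : Sph 2 → ℝ} (hF : SphSmooth F) :
    ContDiff ℝ (⊤ : ℕ∞) fun t => F (circlePt t) := by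
  have h := hF.comp_contDiff contDiff_circlePt fun t => ne_zero_of_mem_unit_sphere (circlePt t)
  simpa only [comp_def, homogExt_coe] using h

lemma norm_mul_exp_add_arg (θ : ℝ) (z : ℂ) :
    ‖z‖ * Complex.exp ((θ + (z * Complex.exp (-(θ * Complex.I))).arg : ℝ) * Complex.I) = z := by
  have hnorm : ‖z * Complex.exp (-(θ * Complex.I))‖ = ‖z‖ := by
    rw [norm_mul, ← neg_mul, ← Complex.ofReal_neg, Complex.norm_exp_ofReal_mul_I, mul_one]
  have hpolar := Complex.norm_mul_exp_arg_mul_I (z * Complex.exp (-(θ * Complex.I)))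
  rw [hnorm] at hpolar
  rw [Complex.ofReal_add, add_mul, Complex.exp_add, mul_left_comm, hpolar, mul_left_comm,
    ← Complex.exp_add, add_neg_cancel, Complex.exp_zero, mul_one]

lemma homogExt_planeIsometryEquiv (F : Sph 2 → ℝ) (θ : ℝ) {z : ℂ} (hz : z ≠ 0) :
    homogExt F (planeIsometryEquiv z)
      = F (circlePt (θ + (z * Complex.exp (-(θ * Complex.I))).arg)) := by
  rw [homogExt, dif_neg (by simpa using hz)]
  congr 1
  ext1
  rw [inv_smul_eq_iff₀ (by simpa using hz), coe_circlePt, ← map_smul, Complex.real_smul,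
    LinearIsometryEquiv.norm_map, norm_mul_exp_add_arg]

lemma hasFDerivAt_arg_one : HasFDerivAt Complex.arg Complex.imCLM 1 := by
  have hlog : HasFDerivAt Complex.log (1 : ℂ →L[ℝ] ℂ) 1 := by
    simpa using!
      (Complex.hasStrictDerivAt_log Complex.one_mem_slitPlane).hasDerivAt.complexToReal_fderiv
  simpa [comp_def, Complex.log_im] using! Complex.imCLM.hasFDerivAt.comp 1 hlog

lemma hasGradientAt_homogExt {F : Sph 2 → ℝ} {θ F' : ℝ}
    (hF : HasDerivAt (fun t => F (circlePt t)) F' θ) :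
    HasGradientAt (homogExt F) (F' • (circlePt (θ + π / 2) : E 2)) (circlePt θ : E 2) := by
  have hrot : planeIsometryEquiv.symm (circlePt θ) * Complex.exp (-(θ * Complex.I)) = 1 := by
    rw [coe_circlePt, LinearIsometryEquiv.symm_apply_apply, ← Complex.exp_add, add_neg_cancel,
      Complex.exp_zero]
  have hlin : HasFDerivAt
      (fun x : E 2 => planeIsometryEquiv.symm x * Complex.exp (-(θ * Complex.I)))
      (Complex.exp (-(θ * Complex.I)) • (planeIsometryEquiv.symm : E 2 →L[ℝ] ℂ)) (circlePt θ) :=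
    (planeIsometryEquiv.symm : E 2 →L[ℝ] ℂ).hasFDerivAt.mul_const _
  have hangle := ((hrot ▸ hasFDerivAt_arg_one).comp (circlePt θ : E 2) hlin).const_add θ
  have hcomp := HasDerivAt.comp_hasFDerivAt (circlePt θ : E 2)
    (h₂ := fun t => F (circlePt t)) (h₂' := F') (by simpa [hrot] using hF) hangle
  rw [hasGradientAt_iff_hasFDerivAt]
  refine (hcomp.congr_of_eventuallyEq ?_).congr_fderiv ?_
  · filter_upwards [isOpen_ne.mem_nhds (ne_zero_of_mem_unit_sphere (circlePt θ))] with x hx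
    simpa using homogExt_planeIsometryEquiv F θ (z := planeIsometryEquiv.symm x) (by simpa using hx)
  · ext v
    obtain ⟨z, rfl⟩ := planeIsometryEquiv.surjective v
    simp [inner_circlePt_add_pi_div_two, mul_comm]

lemma sphGrad_circlePt {F : Sph 2 → ℝ} {θ F' : ℝ}
    (hF : HasDerivAt (fun t => F (circlePt t)) F' θ) :
    sphGrad F (circlePt θ) = F' • (circlePt (θ + π / 2) : E 2) :=
  (hasGradientAt_homogExt hF).gradient

end UnitCircle

section CarreDuChamp

variable {b : ℝ → ℝ} {G : Sph 2 → ℝ} {g : ℝ → ℝ}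

lemma integral_mul_inner_circlePt (b : ℝ → ℝ) (F : Sph 2 → ℝ) (θ : ℝ) :
    ∫ σ, F σ * b ⟪(σ : E 2), (circlePt θ : E 2)⟫ ∂(sphMeasure 2)
      = angularDensity * ∫ s in 0..2 * π, F (circlePt (θ + s)) * b (cos s) := by
  have hper : Periodic (fun s => F (circlePt s) * b (cos (s - θ))) (2 * π) := fun s => by
    simp only [periodic_circlePt s, add_sub_right_comm, cos_periodic _]
  rw [integral_sphMeasure_two]
  simp only [inner_circlePt]
  rw [← integral_comp_add_left_of_periodic hper θ]
  simp only [add_sub_cancel_left]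

lemma sphB_circlePt (b : ℝ → ℝ) (F : Sph 2 → ℝ) (θ : ℝ) :
    sphB b F (circlePt θ)
      = angularDensity * ∫ s in 0..2 * π, (F (circlePt (θ + s)) - F (circlePt θ)) * b (cos s) :=
  integral_mul_inner_circlePt b (fun σ => F σ - F (circlePt θ)) θ

lemma sphGrad_sphB_circlePt (hb : IntervalIntegrable (fun s => b (cos s)) volume 0 (2 * π))
    (hG : ∀ t, G (circlePt t) = g t) (hg : ContDiff ℝ 1 g) (θ : ℝ) :
    sphGrad (fun τ => sphB b G τ) (circlePt θ)
      = (angularDensity * ∫ s in 0..2 * π, (deriv g (θ + s) - deriv g θ) * b (cos s)) •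
        (circlePt (θ + π / 2) : E 2) := by
  refine sphGrad_circlePt ?_
  simp only [sphB_circlePt, hG]
  exact (hasDerivAt_integral_sub_mul hg hb θ).const_mul _

theorem Gamma2BD_circlePt (hb : IntervalIntegrable (fun s => b (cos s)) volume 0 (2 * π))
    (hG : ∀ t, G (circlePt t) = g t) (hg : ContDiff ℝ 1 g) (θ : ℝ) :
    Gamma2BD b G (circlePt θ)
      = angularDensity / 2 * ∫ s in 0..2 * π, (deriv g (θ + s) - deriv g θ) ^ 2 * b (cos s) := by
  have : Continuous (deriv g) := hg.continuous_deriv le_rfl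
  have hgrad (t : ℝ) : sphGrad G (circlePt t) = deriv g t • (circlePt (t + π / 2) : E 2) :=
    sphGrad_circlePt (by simpa only [hG] using (hg.differentiable one_ne_zero t).hasDerivAt)
  have hexpand : ∫ s in 0..2 * π, (deriv g (θ + s) - deriv g θ) ^ 2 * b (cos s)
      = (∫ s in 0..2 * π, (deriv g (θ + s) ^ 2 - deriv g θ ^ 2) * b (cos s))
        - 2 * deriv g θ * ∫ s in 0..2 * π, (deriv g (θ + s) - deriv g θ) * b (cos s) := by
    rw [← intervalIntegral.integral_const_mul, ← intervalIntegral.integral_sub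
      (hb.continuousOn_mul (by fun_prop)) ((hb.continuousOn_mul (by fun_prop)).const_mul _)]
    congr with s
    ring
  rw [Gamma2BD, sphB_circlePt, sphGrad_sphB_circlePt hb hG hg, hexpand]
  simp only [hgrad, norm_smul, norm_eq_of_mem_sphere, mul_one, norm_eq_abs, sq_abs,
    inner_smul_left, inner_smul_right, inner_circlePt, sub_self, cos_zero, conj_trivial]
  ring

end CarreDuChamp

section PeriodicLogSobolev

variable {f k : ℝ → ℝ} {T m M : ℝ}

lemma sq_sub_div_add_le {x y : ℝ} (hx : 0 < x) (hy : 0 < y) :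
    (x - y) ^ 2 / (x + y) ≤ 2 * (√x - √y) ^ 2 := by
  have hfactor : (x - y) ^ 2 = (√x - √y) ^ 2 * (√x + √y) ^ 2 := by
    rw [← mul_pow, mul_comm, ← sq_sub_sq, sq_sqrt hx.le, sq_sqrt hy.le]
  have hsum : (√x + √y) ^ 2 ≤ 2 * (x + y) := by
    simpa only [sq_sqrt hx.le, sq_sqrt hy.le] using add_sq_le (a := √x) (b := √y)
  rw [hfactor, div_le_iff₀ (add_pos hx hy)]
  calc _ ≤ (√x - √y) ^ 2 * (2 * (x + y)) := by gcongr
    _ = _ := by ring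

lemma deriv_log_sq_mul {t : ℝ} (hf : DifferentiableAt ℝ f t) (hpos : 0 < f t) :
    deriv (fun u => log (f u)) t ^ 2 * f t = 4 * deriv (fun u => √(f u)) t ^ 2 := by
  rw [deriv.log hf hpos.ne', deriv_sqrt hf hpos.ne', div_pow, div_pow, mul_pow, sq_sqrt hpos.le]
  field_simp
  ring

lemma integral_sq_sub_div_add_mul_le (hT : 0 ≤ T) (hf : Continuous f) (hpos : ∀ t, 0 < f t)
    (hper : Periodic f T) (hk : IntervalIntegrable k volume 0 (2 * T)) (hM : 0 ≤ M)
    (hkM : ∀ s, k s + k (s + T) ≤ M) (t : ℝ) :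
    ∫ s in 0..2 * T, (f (t + s) - f t) ^ 2 / (f (t + s) + f t) * k s
      ≤ 2 * M * ∫ s in 0..T, (√(f s) - √(f t)) ^ 2 := by
  have hsum (s : ℝ) : 0 < f s + f t := add_pos (hpos s) (hpos t)
  have hcont : Continuous fun s => (f s - f t) ^ 2 / (f s + f t) :=
    .div (by fun_prop) (by fun_prop) fun s => (hsum s).ne'
  have hper' : Periodic (fun s => (f s - f t) ^ 2 / (f s + f t)) T := fun s => by simp only [hper s]
  calc _ ≤ M * ∫ s in 0..T, (f (t + s) - f t) ^ 2 / (f (t + s) + f t) :=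
        integral_mul_le_of_add_translate_le hT (hper'.const_add t)
          (hcont.comp (continuous_const_add t)) (fun s => div_nonneg (sq_nonneg _) (hsum _).le)
          hk hkM
    _ = M * ∫ s in 0..T, (f s - f t) ^ 2 / (f s + f t) := by
        rw [integral_comp_add_left_of_periodic hper' t]
    _ ≤ M * ∫ s in 0..T, 2 * (√(f s) - √(f t)) ^ 2 := by
        gcongr
        exact intervalIntegral.integral_mono_on hT (hcont.intervalIntegrable _ _)
          (Continuous.intervalIntegrable (by fun_prop) _ _)
          fun s _ => sq_sub_div_add_le (hpos s) (hpos t)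
    _ = _ := by
        rw [intervalIntegral.integral_const_mul]
        ring

lemma integral_integral_sq_sub_div_add_mul_le (hT : 0 < T) (hf : ContDiff ℝ 1 f)
    (hpos : ∀ t, 0 < f t) (hper : Periodic f T) (hk : IntervalIntegrable k volume 0 (2 * T))
    (hM : 0 ≤ M) (hkM : ∀ s, k s + k (s + T) ≤ M) :
    ∫ t in 0..2 * T, ∫ s in 0..2 * T, (f (t + s) - f t) ^ 2 / (f (t + s) + f t) * k s
      ≤ M * T ^ 3 / π ^ 2 * ∫ t in 0..2 * T, deriv (fun u => √(f u)) t ^ 2 := by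
  have hfc : Continuous f := hf.continuous
  have hroot : ContDiff ℝ 1 fun u => √(f u) := hf.sqrt fun t => (hpos t).ne'
  have hroot' : Continuous (deriv fun u => √(f u)) := hroot.continuous_deriv le_rfl
  have hrootper : Periodic (fun u => √(f u)) T := fun t => by simp only [hper t]
  have hleft : Continuous fun t =>
      ∫ s in 0..2 * T, (f (t + s) - f t) ^ 2 / (f (t + s) + f t) * k s :=
    continuous_integral_mul (.div (by fun_prop) (by fun_prop)
      fun q => (add_pos (hpos (q.1 + q.2)) (hpos q.1)).ne') hk
  have hright : Continuous fun t => ∫ s in 0..T, (√(f s) - √(f t)) ^ 2 :=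
    intervalIntegral.continuous_parametric_intervalIntegral_of_continuous' (by fun_prop) _ _
  calc _ ≤ ∫ t in 0..2 * T, 2 * M * ∫ s in 0..T, (√(f s) - √(f t)) ^ 2 :=
        intervalIntegral.integral_mono_on (by positivity) (hleft.intervalIntegrable _ _)
          ((hright.const_mul _).intervalIntegrable _ _) fun t _ =>
          integral_sq_sub_div_add_mul_le hT.le hfc hpos hper hk hM hkM t
    _ = 4 * M * ∫ t in 0..T, ∫ s in 0..T, (√(f s) - √(f t)) ^ 2 := by
        rw [intervalIntegral.integral_const_mul, integral_zero_two_mul_of_periodic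
          (fun t => by simp only [hper t]) hright]
        ring
    _ ≤ 4 * M * (T ^ 3 / (2 * π ^ 2) * ∫ t in 0..T, deriv (fun u => √(f u)) t ^ 2) := by
        gcongr
        simpa using integral_integral_sub_sq_le hT hroot (by simpa using (hrootper 0).symm)
    _ = _ := by
        rw [integral_zero_two_mul_of_periodic (ψ := fun t => deriv (fun u => √(f u)) t ^ 2)
          (fun t => by simp only [periodic_deriv hrootper t]) (hroot'.pow 2)]
        ring

lemma mul_sq_le_integral_sq_sub_mul {p : ℝ → ℝ} (hT : 0 ≤ T) (hp : Continuous p)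
    (hper : Periodic p T) (hmean : ∫ s in 0..T, p s = 0)
    (hk : IntervalIntegrable k volume 0 (2 * T)) (hm : 0 ≤ m)
    (hkm : ∀ s, m ≤ k s + k (s + T)) (t : ℝ) :
    m * (T * p t ^ 2) ≤ ∫ s in 0..2 * T, (p (t + s) - p t) ^ 2 * k s := by
  have hper' : Periodic (fun s => (p s - p t) ^ 2) T := fun s => by simp only [hper s]
  calc m * (T * p t ^ 2) ≤ m * ((∫ s in 0..T, p s ^ 2) + T * p t ^ 2) := by
        gcongr
        exact le_add_of_nonneg_left (intervalIntegral.integral_nonneg hT fun s _ => sq_nonneg _)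
    _ = m * ∫ s in 0..T, (p s - p t) ^ 2 := by
        rw [intervalIntegral.integral_of_le hT] at hmean ⊢
        rw [intervalIntegral.integral_of_le hT, integral_sub_const_sq
          (memLp_restrict_Ioc_of_continuousOn hp.continuousOn), hmean]
        simp [hT, mul_comm]
    _ = m * ∫ s in 0..T, (p (t + s) - p t) ^ 2 := by
        rw [integral_comp_add_left_of_periodic hper' t]
    _ ≤ _ := le_integral_mul_of_le_add_translate hT (hper'.const_add t) (by fun_prop)
        (fun s => sq_nonneg _) hk hkm

lemma integral_deriv_eq_zero_of_periodic {g : ℝ → ℝ} (hg : ContDiff ℝ 1 g) (hper : Periodic g T) :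
    ∫ s in 0..T, deriv g s = 0 := by
  rw [intervalIntegral.integral_deriv_eq_sub (fun t _ => hg.differentiable one_ne_zero t)
    ((hg.continuous_deriv le_rfl).intervalIntegrable _ _), sub_eq_zero]
  simpa using hper 0

lemma le_integral_integral_deriv_log_sub_sq_mul (hT : 0 ≤ T) (hf : ContDiff ℝ 1 f)
    (hpos : ∀ t, 0 < f t) (hper : Periodic f T) (hk : IntervalIntegrable k volume 0 (2 * T))
    (hm : 0 ≤ m) (hkm : ∀ s, m ≤ k s + k (s + T)) :
    4 * m * T * ∫ t in 0..2 * T, deriv (fun u => √(f u)) t ^ 2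
      ≤ ∫ t in 0..2 * T, (∫ s in 0..2 * T, (deriv (fun u => log (f u)) (t + s) -
        deriv (fun u => log (f u)) t) ^ 2 * k s) * f t := by
  have hlog : ContDiff ℝ 1 fun u => log (f u) := hf.log fun t => (hpos t).ne'
  have hlog' : Continuous (deriv fun u => log (f u)) := hlog.continuous_deriv le_rfl
  have hroot' : Continuous (deriv fun u => √(f u)) :=
    (hf.sqrt fun t => (hpos t).ne').continuous_deriv le_rfl
  have hlogper : Periodic (fun u => log (f u)) T := fun t => by simp only [hper t]
  have hright : Continuous fun t => ∫ s in 0..2 * T,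
      (deriv (fun u => log (f u)) (t + s) - deriv (fun u => log (f u)) t) ^ 2 * k s :=
    continuous_integral_mul (by fun_prop) hk
  rw [← intervalIntegral.integral_const_mul]
  refine intervalIntegral.integral_mono_on (by positivity)
    (Continuous.intervalIntegrable (by fun_prop) _ _)
    ((hright.mul hf.continuous).intervalIntegrable _ _) fun t _ => ?_
  calc 4 * m * T * deriv (fun u => √(f u)) t ^ 2
      = m * (T * deriv (fun u => log (f u)) t ^ 2) * f t := by
        rw [mul_assoc m, mul_assoc T, deriv_log_sq_mul (hf.differentiable one_ne_zero t) (hpos t)]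
        ring
    _ ≤ _ := mul_le_mul_of_nonneg_right (mul_sq_le_integral_sq_sub_mul hT hlog'
        (periodic_deriv hlogper) (integral_deriv_eq_zero_of_periodic hlog hlogper) hk hm hkm t)
        (hpos t).le

theorem periodic_logSobolev (hT : 0 < T) (hf : ContDiff ℝ 1 f) (hpos : ∀ t, 0 < f t)
    (hper : Periodic f T) (hk : IntervalIntegrable k volume 0 (2 * T)) (hm : 0 ≤ m) (hM : 0 < M)
    (hkmM : ∀ s, k s + k (s + T) ∈ Icc m M) :
    4 * m * π ^ 2 / (M * T ^ 2) *
        ∫ t in 0..2 * T, ∫ s in 0..2 * T, (f (t + s) - f t) ^ 2 / (f (t + s) + f t) * k s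
      ≤ ∫ t in 0..2 * T, (∫ s in 0..2 * T, (deriv (fun u => log (f u)) (t + s) -
        deriv (fun u => log (f u)) t) ^ 2 * k s) * f t := by
  calc _ ≤ 4 * m * π ^ 2 / (M * T ^ 2) *
        (M * T ^ 3 / π ^ 2 * ∫ t in 0..2 * T, deriv (fun u => √(f u)) t ^ 2) := by
        gcongr
        exact integral_integral_sq_sub_div_add_mul_le hT hf hpos hper hk hM.le fun s => (hkmM s).2
    _ = 4 * m * T * ∫ t in 0..2 * T, deriv (fun u => √(f u)) t ^ 2 := by
        field_simp
    _ ≤ _ := le_integral_integral_deriv_log_sub_sq_mul hT.le hf hpos hper hk hm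
        fun s => (hkmM s).1

end PeriodicLogSobolev

theorem logSobolev_planar_hard_spheres_general {b : ℝ → ℝ} {m M : ℝ}
    (hb : IntervalIntegrable (fun s => b (cos s)) volume 0 (2 * π)) (hm : 0 ≤ m) (hM : 0 < M)
    (hbmM : ∀ c ∈ Icc (-1) 1, b c + b (-c) ∈ Icc m M) :
    LS 2 b (2 * m / M) := by
  intro f hf hpos heven
  have hu : ContDiff ℝ 1 fun t => f (circlePt t) :=
    hf.contDiff_comp_circlePt.of_le (by exact_mod_cast le_top)
  have hper : Periodic (fun t => f (circlePt t)) π := fun t => by simp only [circlePt_add_pi, heven]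
  have hangle := periodic_logSobolev pi_pos hu (fun t => hpos _) hper hb hm hM fun s => by
    simpa only [cos_add_pi] using hbmM (cos s) (cos_mem_Icc s)
  have hlog : ContDiff ℝ 1 fun t => log (f (circlePt t)) := hu.log fun t => (hpos _).ne'
  have hΓ (t : ℝ) := (congrArg (· * f (circlePt t)) (Gamma2BD_circlePt hb
    (G := fun τ => log (f τ)) (fun _ => rfl) hlog t)).trans (mul_assoc _ _ _)
  have hdirichlet (t : ℝ) := integral_mul_inner_circlePt b
    (fun σ => (f σ - f (circlePt t)) ^ 2 / (f σ + f (circlePt t))) t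
  rw [integral_sphMeasure_two, integral_sphMeasure_two]
  simp only [hdirichlet, hΓ, intervalIntegral.integral_const_mul]
  rw [mul_div_mul_right _ _ (by positivity)] at hangle
  linear_combination (angularDensity ^ 2 / 2 : ℝ) * hangle

lemma hardSphere_add_neg_mem {c : ℝ} (hc : c ∈ Icc (-1) 1) :
    1 / 2 * √(1 - c) + 1 / 2 * √(1 - -c) ∈ Icc (√2 / 2) 1 := by
  have hsub : √(1 - c) ^ 2 = 1 - c := sq_sqrt (by linarith [hc.2])
  have hadd : √(1 - -c) ^ 2 = 1 - -c := sq_sqrt (by linarith [hc.1])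
  have hprod : 0 ≤ √(1 - c) * √(1 - -c) := by positivity
  have hlower : √2 ≤ √(1 - c) + √(1 - -c) := sqrt_le_iff.2 ⟨by positivity, by nlinarith⟩
  have hupper : (√(1 - c) + √(1 - -c)) ^ 2 ≤ 2 * (√(1 - c) ^ 2 + √(1 - -c) ^ 2) := add_sq_le
  constructor
  · linarith
  · nlinarith

end

/-- For the planar hard-sphere kernel `b(c) = ½ √(1-c)` on the unit circle,
the log-Sobolev inequality `LS(√2, b)` holds. -/
theorem logSobolev_planar_hard_spheres :
    LS 2 (fun c => (1 / 2) * Real.sqrt (1 - c)) (Real.sqrt 2) := by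
  simpa [mul_div_cancel₀] using logSobolev_planar_hard_spheres_general
    (b := fun c => (1 / 2) * Real.sqrt (1 - c))
    (Continuous.intervalIntegrable (by fun_prop) _ _) (by positivity) one_pos
    fun _ => hardSphere_add_neg_mem
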